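/- Let σ be a finite Borel measure on the circle 𝕋 = ℝ/ℤ that is NOT mutually singular with respect to the Haar probability measure m (i.e., the absolutely continuous part of σ in its Lebesgue decomposition with respect to m is nonzero). Then there exist real numbers a > 0 and b > 0 and an integer P₀ such that for every integer P ≥ P₀, the number of indices k ∈ {0, …, P−1} with σ(I_{k,P}) > b/P is strictly greater than a·P. -/

import Mathlib

open MeasureTheory Filter Set
open scoped ENNReal

/-- The arc `I_{k,P}` of the circle `ℝ/ℤ`: the image of `[k/P, (k+1)/P)` under the
quotient map `ℝ → ℝ/ℤ`. -/
noncomputable def arc (k P : ℕ) : Set (AddCircle (1 : ℝ)) :=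
  (fun x : ℝ => (x : AddCircle (1 : ℝ))) '' Set.Ico ((k : ℝ) / P) (((k : ℝ) + 1) / P)

theorem arc_measurable (k P : ℕ) (hP : 0 < P) : MeasurableSet (arc k P) := by
  have hP' : (1 : ℝ) ≤ P := by exact_mod_cast hP
  refine MeasurableSet.image_of_continuousOn_injOn measurableSet_Ico
    (AddCircle.continuous_mk' (1 : ℝ)).continuousOn ?_
  have hsub : Set.Ico ((k : ℝ) / P) (((k : ℝ) + 1) / P) ⊆
      Set.Ico ((k : ℝ) / P) ((k : ℝ) / P + 1) := by
    apply Set.Ico_subset_Ico_right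
    rw [add_div]
    have : 1 / (P : ℝ) ≤ 1 := by
      rw [div_le_one (by linarith)]; exact hP'
    linarith
  intro x hx y hy hxy
  exact (AddCircle.coe_eq_coe_iff_of_mem_Ico (hsub hx) (hsub hy)).1 hxy

theorem arc_volume_le (k P : ℕ) : (volume : Measure (AddCircle (1 : ℝ))).real (arc k P) ≤ 1 / P := by
  have hsub : arc k P ⊆ Metric.closedBall
      (((((k : ℝ) + 1 / 2) / P : ℝ)) : AddCircle (1 : ℝ)) (1 / (2 * P)) := by
    rintro _ ⟨x, hx, rfl⟩
    have key := AddCircle.coe_real_preimage_closedBall_eq_iUnion (1 : ℝ)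
      (((k : ℝ) + 1 / 2) / P) (1 / (2 * P))
    refine (Set.ext_iff.1 key x).2 ?_
    refine Set.mem_iUnion.2 ⟨0, ?_⟩
    rw [Metric.mem_closedBall, Real.dist_eq, abs_le]
    have e1 : ((k : ℝ) + 1 / 2) / P = (k : ℝ) / P + 1 / (2 * P) := by
      rw [add_div, div_div]
    have e2 : ((k : ℝ) + 1) / P = (k : ℝ) / P + 2 * (1 / (2 * P)) := by
      rw [add_div]; congr 1; rw [← div_div]; ring
    have h1 := hx.1
    have h2 := hx.2
    rw [e2] at h2
    rw [e1, zero_smul]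
    constructor <;> linarith
  have h1 := measureReal_mono (μ := (volume : Measure (AddCircle (1 : ℝ)))) hsub
  refine h1.trans ?_
  rw [measureReal_def, AddCircle.volume_closedBall, ENNReal.toReal_ofReal (by positivity)]
  refine (min_le_right _ _).trans (le_of_eq ?_)
  rw [← div_div]; ring

theorem arc_cover (P : ℕ) (hP : 0 < P) (x : AddCircle (1 : ℝ)) :
    ∃ k ∈ Finset.range P, x ∈ arc k P := by
  have hP' : (0 : ℝ) < P := by exact_mod_cast hP
  obtain ⟨y, hy, rfl⟩ : ∃ y ∈ Set.Ico (0 : ℝ) 1, (y : AddCircle (1 : ℝ)) = x := by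
    have := AddCircle.coe_image_Ico_eq (1 : ℝ) 0
    have hx : x ∈ (Set.univ : Set (AddCircle (1 : ℝ))) := trivial
    rw [← this, zero_add] at hx
    exact hx
  have h0 : 0 ≤ y * P := mul_nonneg hy.1 hP'.le
  refine ⟨⌊y * P⌋₊, ?_, y, ⟨?_, ?_⟩, rfl⟩
  · rw [Finset.mem_range, Nat.floor_lt h0]
    nlinarith [hy.2]
  · rw [div_le_iff₀ hP']; exact Nat.floor_le h0
  · rw [lt_div_iff₀ hP']; exact Nat.lt_floor_add_one _

/-- If a finite Borel measure `σ` on the circle is *not* mutually singular with respect to Haar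
measure, then there are `a, b > 0` and `P₀` such that for all `P ≥ P₀`, the number of `k < P`
with `σ(I_{k,P}) > b/P` is strictly greater than `a·P`. -/
theorem not_singular_implies_many_big_arcs
    (σ : Measure (AddCircle (1 : ℝ))) [IsFiniteMeasure σ]
    (h : ¬ σ.MutuallySingular volume) :
    ∃ a b : ℝ, 0 < a ∧ 0 < b ∧ ∃ P₀ : ℕ, ∀ P : ℕ, P₀ ≤ P →
      a * (P : ℝ) <
        (({k : ℕ | k < P ∧ ENNReal.ofReal (b / P) < σ (arc k P)}.ncard : ℝ)) := by
  classical
  obtain ⟨ε, hε, E, hE, hE0, hpos⟩ :=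
    Measure.exists_positive_of_not_mutuallySingular σ volume h
  set m : Measure (AddCircle (1 : ℝ)) := volume with hm
  have hδ : 0 < m.real E := ENNReal.toReal_pos hE0.ne' (measure_ne_top _ _)
  set δ := m.real E with hδdef
  have hε' : (0 : ℝ) < ε := hε
  refine ⟨δ / 4, ε * (δ / 2), by positivity, by positivity, 1, fun P hP => ?_⟩
  have hP0 : 0 < P := hP
  have hP' : (0 : ℝ) < P := by exact_mod_cast hP0
  have hsum : δ ≤ ∑ k ∈ Finset.range P, m.real (arc k P ∩ E) := by
    refine le_trans (measureReal_mono ?_ (measure_ne_top _ _))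
      (measureReal_biUnion_finset_le (Finset.range P) (fun k => arc k P ∩ E))
    intro x hx
    obtain ⟨k, hk, hxk⟩ := arc_cover P hP0 x
    exact Set.mem_biUnion (by exact hk) ⟨hxk, hx⟩
  set G := (Finset.range P).filter (fun k => δ / 2 / P < m.real (arc k P ∩ E)) with hG
  have hle : ∑ k ∈ Finset.range P, m.real (arc k P ∩ E) ≤
      ∑ k ∈ Finset.range P, (δ / 2 / P + if δ / 2 / P < m.real (arc k P ∩ E) then 1 / (P : ℝ) else 0) := by
    refine Finset.sum_le_sum fun k _ => ?_
    split_ifs with hk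
    · have h1 : m.real (arc k P ∩ E) ≤ m.real (arc k P) := measureReal_mono Set.inter_subset_left
      have h2 : m.real (arc k P) ≤ 1 / P := arc_volume_le k P
      have h3 : 0 ≤ δ / 2 / P := by positivity
      linarith
    · rw [add_zero]; exact not_lt.1 hk
  rw [Finset.sum_add_distrib, Finset.sum_const, Finset.card_range, nsmul_eq_mul,
    ← Finset.sum_filter, Finset.sum_const, nsmul_eq_mul, mul_div_cancel₀ _ hP'.ne'] at hle
  have hcard : δ / 2 * P ≤ (G.card : ℝ) := by
    have : δ / 2 ≤ G.card * (1 / (P : ℝ)) := by linarith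
    rw [mul_one_div, le_div_iff₀ hP'] at this
    exact this
  have hfin : {k : ℕ | k < P ∧ ENNReal.ofReal (ε * (δ / 2) / P) < σ (arc k P)}.Finite :=
    (Set.finite_lt_nat P).subset fun k hk => hk.1
  have hsub : (G : Set ℕ) ⊆ {k : ℕ | k < P ∧ ENNReal.ofReal (ε * (δ / 2) / P) < σ (arc k P)} := by
    intro k hk
    obtain ⟨hk1, hk2⟩ := Finset.mem_filter.1 (Finset.mem_coe.1 hk)
    refine ⟨Finset.mem_range.1 hk1, ?_⟩
    refine lt_of_lt_of_le ?_ ((hpos _ (arc_measurable k P hP0)).trans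
      (measure_mono Set.inter_subset_left))
    have e : (ε : ℝ≥0∞) * m (arc k P ∩ E) = ENNReal.ofReal (ε * m.real (arc k P ∩ E)) := by
      rw [ENNReal.ofReal_mul hε'.le, ofReal_measureReal, ENNReal.ofReal_coe_nnreal]
    rw [e, mul_div_assoc]
    have h3 : 0 ≤ δ / 2 / P := by positivity
    refine (ENNReal.ofReal_lt_ofReal_iff (mul_pos hε' (lt_of_le_of_lt h3 hk2))).2 ?_
    exact mul_lt_mul_of_pos_left hk2 hε'
  have hn := Set.ncard_le_ncard hsub hfin
  rw [Set.ncard_coe_finset] at hn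
  have hn' : (G.card : ℝ) ≤ _ := Nat.cast_le.2 hn
  refine lt_of_lt_of_le ?_ hn'
  have : 0 < δ * P := by positivity
  linarith
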